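/- Let p>2 and U⊆V be finite and nonempty. Suppose there is δ>0 with σ(x,t) ≥ δ for all x∈U and t ≥ 0, that u0 ≥ 0 on U and u0 is not identically zero on U, and that for some fixed ε>0, f(s) ≥ (1/δ + ε)·s^{p−1} for all s ≥ 0. Then the (unique) nonnegative solution u of the Dirichlet problem u_t = Δ_p|_U u + σ(x,t)f(u) in U×(0,T), u=0 on ∂U×[0,T), u(·,0)=u0 on U, blows up in finite time: its maximal existence time T is finite and max_{x∈U} u(x,t) → ∞ as t → T⁻. -/

import Mathlib

open scoped ENNReal
open Classical Filter Set

/-- The weighted degree `μ(x) = ∑_{y ∼ x} ω(x,y)` of a vertex of a locally finite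
weighted graph (non-neighbours contribute `ω(x,y) = 0`). -/
noncomputable def graphMu {V : Type*} (ω : V → V → ℝ) (x : V) : ℝ := ∑' y, ω x y

/-- The graph `p`-Laplacian
`Δ_p f(x) = (1/μ(x)) ∑_{y ∼ x} ω(x,y) |f(y) - f(x)|^{p-2} (f(y) - f(x))`. -/
noncomputable def pLap {V : Type*} (ω : V → V → ℝ) (p : ℝ) (f : V → ℝ) (x : V) : ℝ :=
  (graphMu ω x)⁻¹ * ∑' y, ω x y * |f y - f x| ^ (p - 2) * (f y - f x)

/-- The (outer vertex) boundary of `U`: vertices outside `U` adjacent to some vertex of `U`. -/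
def bdry {V : Type*} (ω : V → V → ℝ) (U : Set V) : Set V :=
  {x | x ∉ U ∧ ∃ y ∈ U, 0 < ω x y}

/-- `Ū = U ∪ ∂U`. -/
def vclosure {V : Type*} (ω : V → V → ℝ) (U : Set V) : Set V := U ∪ bdry ω U

/-- The time interval `[0,T)` for an extended-real time horizon `T ∈ (0,∞]`. -/
def ITv (T : ℝ≥0∞) : Set ℝ := {t : ℝ | 0 ≤ t ∧ ENNReal.ofReal t < T}

/-- A nonnegative solution on `Ū × [0,T)` of the Dirichlet problem
`u_t = Δ_p|_U u + σ(x,t) f(u)` in `U × (0,T)`, `u = 0` on `∂U × [0,T)`, `u(·,0) = u0` on `U`.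
(For `x ∈ U` all neighbours of `x` lie in `Ū`, so `Δ_p` coincides with `Δ_p|_U` there.) -/
def IsNonnegDirichletSol {V : Type*} (ω : V → V → ℝ) (p : ℝ) (σ : V → ℝ → ℝ) (f : ℝ → ℝ)
    (u0 : V → ℝ) (U : Set V) (T : ℝ≥0∞) (u : V → ℝ → ℝ) : Prop :=
  (∀ x ∈ U, ContDiffOn ℝ 1 (u x) (ITv T)) ∧
  (∀ x ∈ vclosure ω U, ∀ t ∈ ITv T, 0 ≤ u x t) ∧
  (∀ x ∈ U, ∀ t ∈ ITv T, 0 < t →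
    derivWithin (u x) (ITv T) t = pLap ω p (fun y => u y t) x + σ x t * f (u x t)) ∧
  (∀ x ∈ bdry ω U, ∀ t ∈ ITv T, u x t = 0) ∧
  (∀ x ∈ U, u x 0 = u0 x)

/-! At a vertex `x ∈ U` where `m t = max_{x ∈ U} u(x,t)` is attained, every difference
`u(y) - u(x)` lies in `[-m, 0]`, so `Δ_p u ≥ -m ^ (p - 1)`, and the source term contributes at
least `δ (1/δ + ε) m ^ (p - 1)`. Hence `m' ≥ δ ε m ^ (p - 1)` in the sense of lower right
derivatives. Since `p - 1 > 1`, comparison with the explicit solution of `B' = κ B ^ (p - 1)`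
for some `0 < κ < δ ε` bounds the existence time. As `m` is nondecreasing, it tends to infinity
unless it is bounded; but on a finite `U` the problem is a locally Lipschitz ODE, whose bounded
solutions continue past `T`, contradicting maximality. -/

open scoped Topology

lemma hasDerivAt_abs_rpow_mul_self {q : ℝ} (hq : 0 < q) (s : ℝ) :
    HasDerivAt (fun s : ℝ => |s| ^ q * s) ((q + 1) * |s| ^ q) s := by
  have hcont : Continuous fun s : ℝ => |s| ^ q := continuous_abs.rpow_const fun _ => .inr hq.le
  refine hasDerivAt_of_hasDerivAt_of_ne' (x := 0) (fun s hs => ?_)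
    (hcont.mul continuous_id).continuousAt (hcont.const_mul (q + 1)).continuousAt s
  have habs : 0 < |s| := abs_pos.2 hs
  have hpow : |s| ^ (q - 1) * |s| = |s| ^ q := by
    rw [← Real.rpow_add_one habs.ne', sub_add_cancel]
  refine (((hasDerivAt_abs hs).rpow_const (.inl habs.ne')).mul (hasDerivAt_id' s)).congr_deriv ?_
  calc (SignType.sign s : ℝ) * q * |s| ^ (q - 1) * s + |s| ^ q * 1
      = q * (|s| ^ (q - 1) * (SignType.sign s * s)) + |s| ^ q := by ring
    _ = (q + 1) * |s| ^ q := by rw [sign_mul_self, hpow]; ring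

lemma contDiff_abs_rpow_mul_self {q : ℝ} (hq : 0 < q) :
    ContDiff ℝ 1 fun s : ℝ => |s| ^ q * s := by
  refine contDiff_one_iff_deriv.2
    ⟨fun s => (hasDerivAt_abs_rpow_mul_self hq s).differentiableAt, ?_⟩
  rw [funext fun s => (hasDerivAt_abs_rpow_mul_self hq s).deriv]
  exact (continuous_abs.rpow_const fun _ => .inr hq.le).const_mul _

lemma locallyLipschitz_pi {α ι : Type*} [PseudoEMetricSpace α] [Fintype ι] {X : ι → Type*}
    [∀ i, PseudoEMetricSpace (X i)] {f : α → ∀ i, X i}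
    (hf : ∀ i, LocallyLipschitz fun a => f a i) : LocallyLipschitz f := by
  intro a
  choose K s hs hK using fun i => hf i a
  refine ⟨Finset.univ.sup K, ⋂ i, s i, iInter_mem.2 hs, fun x hx y hy => ?_⟩
  refine edist_pi_le_iff.2 fun i => (hK i (mem_iInter.1 hx i) (mem_iInter.1 hy i)).trans ?_
  gcongr
  exact Finset.le_sup (Finset.mem_univ i)

lemma nonneg_of_deriv_nonneg_of_neg {v v' : ℝ → ℝ} {a b : ℝ}
    (hv : ∀ t ∈ Icc a b, HasDerivWithinAt v (v' t) (Icc a b) t) (ha : 0 ≤ v a)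
    (hv' : ∀ t ∈ Ico a b, v t < 0 → 0 ≤ v' t) {t : ℝ} (ht : t ∈ Icc a b) : 0 ≤ v t := by
  have barrier {η : ℝ} (hη : 0 < η) : -v t ≤ η * (1 + (t - a)) := by
    refine image_le_of_deriv_right_lt_deriv_boundary (f := fun t => -v t) (f' := fun t => -v' t)
      (B := fun t => η * (1 + (t - a))) (B' := fun _ => η)
      (fun t ht => (hv t ht).continuousWithinAt.neg) (fun t ht => ?_) (by simp; linarith)
      (fun t => ?_) (fun t ht htB => ?_) ht
    · exact ((hv t (Ico_subset_Icc_self ht)).mono_of_mem_nhdsWithin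
        (Icc_mem_nhdsGE_of_mem ht)).neg
    · simpa using (((hasDerivAt_id t).sub_const a).const_add 1).const_mul η
    · have : 0 < η * (1 + (t - a)) := mul_pos hη (by linarith [ht.1])
      linarith [hv' t ht (by linarith)]
  have hlim : Tendsto (fun η : ℝ => η * (1 + (t - a))) (𝓝[>] 0) (𝓝 0) :=
    ((continuous_mul_const (1 + (t - a))).tendsto' 0 0 (zero_mul _)).mono_left nhdsWithin_le_nhds
  linarith [ge_of_tendsto hlim (eventually_mem_nhdsWithin.mono fun η hη => barrier hη)]

section ODE

variable {E P : Type*} [NormedAddCommGroup E] [NormedSpace ℝ E]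

lemma exists_tendsto_nhdsLT_of_norm_deriv_le [CompleteSpace E] {u u' : ℝ → E} {a b C : ℝ}
    (hab : a < b) (hu : ∀ t ∈ Ico a b, HasDerivWithinAt u (u' t) (Ico a b) t)
    (hC : ∀ t ∈ Ico a b, ‖u' t‖ ≤ C) : ∃ x, Tendsto u (𝓝[<] b) (𝓝 x) := by
  have hLip : LipschitzOnWith C.toNNReal u (Ico a b) :=
    (convex_Ico a b).lipschitzOnWith_of_nnnorm_hasDerivWithin_le hu fun t ht =>
      NNReal.coe_le_coe.1 ((hC t ht).trans (Real.le_coe_toNNReal C))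
  exact CompleteSpace.complete <| (cauchy_nhds.mono nhdsWithin_le_nhds).map_of_le
    hLip.uniformContinuousOn (le_principal_iff.2 (Ico_mem_nhdsLT hab))

lemma hasDerivWithinAt_piecewise_Iio {F : ℝ → E → E} {u w : ℝ → E} {a b c : ℝ} (hab : a < b)
    (hbc : b < c) (hu : ∀ t ∈ Ico a b, HasDerivWithinAt u (F t (u t)) (Ico a b) t)
    (hw : ∀ t ∈ Icc b c, HasDerivWithinAt w (F t (w t)) (Icc b c) t)
    (hlim : Tendsto u (𝓝[<] b) (𝓝 (w b)))
    (hF : Tendsto (fun t => F t (u t)) (𝓝[<] b) (𝓝 (F b (w b)))) :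
    ∀ t ∈ Ico a c, HasDerivWithinAt ((Iio b).piecewise u w) (F t ((Iio b).piecewise u w t))
      (Ico a c) t := by
  have hleft : EqOn ((Iio b).piecewise u w) u (Iio b) := piecewise_eqOn _ _ _
  have hright : EqOn ((Iio b).piecewise u w) w (Ici b) := by
    simpa only [compl_Iio] using piecewise_eqOn_compl (Iio b) u w
  intro t ht
  rcases lt_trichotomy t b with htb | rfl | hbt
  · rw [hleft htb]
    refine ((hu t ⟨ht.1, htb⟩).mono_of_mem_nhdsWithin ?_).congr_of_eventuallyEq
      (mem_nhdsWithin_of_mem_nhds <| hleft.eventuallyEq_of_mem (Iio_mem_nhds htb)) (hleft htb)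
    exact mem_of_superset (inter_mem_nhdsWithin _ (Iio_mem_nhds htb)) fun s hs => ⟨hs.1.1, hs.2⟩
  · have hderiv {s : ℝ} (hs : s ∈ Ioo a t) :
        HasDerivAt ((Iio t).piecewise u w) (F s (u s)) s :=
      ((hu s (Ioo_subset_Ico_self hs)).hasDerivAt (Ico_mem_nhds hs.1 hs.2)).congr_of_eventuallyEq
        (hleft.eventuallyEq_of_mem (Iio_mem_nhds hs.2))
    have hIic : HasDerivWithinAt ((Iio t).piecewise u w) (F t (w t)) (Iic t) t := by
      refine hasDerivWithinAt_Iic_of_tendsto_deriv (s := Ioo a t)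
        (fun s hs => (hderiv hs).differentiableAt.differentiableWithinAt) ?_
        (Ioo_mem_nhdsLT hab) ?_
      · rw [ContinuousWithinAt, hright self_mem_Ici, nhdsWithin_Ioo_eq_nhdsLT hab]
        exact hlim.congr' (hleft.symm.eventuallyEq_of_mem self_mem_nhdsWithin)
      · refine hF.congr' ?_
        filter_upwards [Ioo_mem_nhdsLT hab] with s hs using (hderiv hs).deriv.symm
    have hIci : HasDerivWithinAt ((Iio t).piecewise u w) (F t (w t)) (Ici t) t :=
      ((hw t (left_mem_Icc.2 hbc.le)).mono_of_mem_nhdsWithin (Icc_mem_nhdsGE hbc)).congr hright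
        (hright self_mem_Ici)
    rw [hright self_mem_Ici]
    exact (hIic.union hIci).mono (by simp [Iic_union_Ici])
  · rw [hright hbt.le]
    exact (((hw t ⟨hbt.le, ht.2.le⟩).hasDerivAt (Icc_mem_nhds hbt ht.2)).congr_of_eventuallyEq
      (hright.eventuallyEq_of_mem (Ici_mem_nhds hbt))).hasDerivWithinAt

variable [PseudoEMetricSpace P] {H : P × E → E} {s : ℝ → P} {a b : ℝ}

lemma exists_hasDerivWithinAt_of_locallyLipschitz [CompleteSpace E] (hH : LocallyLipschitz H)
    (hab : a < b) (hs : ContinuousOn s (Icc a b)) (x₀ : E) :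
    ∃ c ∈ Ioc a b, ∃ w : ℝ → E, w a = x₀ ∧
      ∀ t ∈ Icc a c, HasDerivWithinAt w (H (s t, w t)) (Icc a c) t := by
  obtain ⟨K, S, hS, hK⟩ := hH (s a, x₀)
  obtain ⟨L, hL⟩ := exists_gt ‖H (s a, x₀)‖
  have hL0 : 0 < L := (norm_nonneg _).trans_lt hL
  have hbound : ∀ᶠ q in 𝓝 (s a, x₀), ‖H q‖ ≤ L :=
    (hH.continuous.norm.tendsto _).eventually_le_const hL
  obtain ⟨A, hA, B, hB, hAB⟩ := mem_nhds_prod_iff.1 (inter_mem hS hbound)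
  obtain ⟨r, hr, hrB⟩ := Metric.nhds_basis_closedBall.mem_iff.1 hB
  have hsA : s ⁻¹' A ∈ 𝓝[≥] a := by
    rw [← nhdsWithin_Icc_eq_nhdsGE hab]
    exact hs a (left_mem_Icc.2 hab.le) hA
  obtain ⟨d, had, hdA⟩ := mem_nhdsGE_iff_exists_Icc_subset.1 hsA
  set c := min (min b d) (a + r / L)
  have hac : a < c := lt_min (lt_min hab had) (by linarith [div_pos hr hL0])
  have hcb : c ≤ b := (min_le_left _ _).trans (min_le_left _ _)
  have hmem {t : ℝ} (ht : t ∈ Icc a c) {x : E} (hx : x ∈ Metric.closedBall x₀ r) :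
      (s t, x) ∈ S ∩ {q | ‖H q‖ ≤ L} :=
    hAB ⟨hdA ⟨ht.1, ht.2.trans ((min_le_left _ _).trans (min_le_right _ _))⟩, hrB hx⟩
  have hPL : IsPicardLindelof (fun t x => H (s t, x)) (tmin := a) (tmax := c)
      ⟨a, left_mem_Icc.2 hac.le⟩ x₀ ⟨r, hr.le⟩ 0 ⟨L, hL0.le⟩ K :=
    { lipschitzOnWith := fun t ht x hx y hy => by
        simpa [Prod.edist_eq] using hK (hmem ht hx).1 (hmem ht hy).1
      continuousOn := fun x _ => hH.continuous.comp_continuousOn <|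
        (hs.mono (Icc_subset_Icc_right hcb)).prodMk continuousOn_const
      norm_le := fun t ht x hx => (hmem ht hx).2
      mul_max_le := by
        have hcr : c - a ≤ r / L := by linarith [min_le_right (min b d) (a + r / L)]
        change L * max (c - a) (a - a) ≤ r - 0
        rw [sub_self, max_eq_left (sub_nonneg.2 hac.le), sub_zero]
        exact (le_div_iff₀' hL0).1 hcr }
  exact ⟨c, ⟨hac, hcb⟩, hPL.exists_eq_forall_mem_Icc_hasDerivWithinAt₀⟩

lemma exists_continuation_of_bounded [ProperSpace E] (hH : LocallyLipschitz H) (hab : a < b)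
    (hs : ContinuousOn s (Ici a)) {u : ℝ → E}
    (hu : ∀ t ∈ Ico a b, HasDerivWithinAt u (H (s t, u t)) (Ico a b) t) {M : ℝ}
    (hM : ∀ t ∈ Ico a b, ‖u t‖ ≤ M) :
    ∃ c > b, ∃ v : ℝ → E, EqOn v u (Ico a b) ∧
      ∀ t ∈ Ico a c, HasDerivWithinAt v (H (s t, v t)) (Ico a c) t := by
  have hcompact : IsCompact (H '' ((s '' Icc a b) ×ˢ Metric.closedBall 0 M)) :=
    ((isCompact_Icc.image_of_continuousOn (hs.mono Icc_subset_Ici_self)).prod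
      (isCompact_closedBall 0 M)).image hH.continuous
  obtain ⟨C, hC⟩ := hcompact.isBounded.exists_norm_le
  obtain ⟨x₀, hx₀⟩ := exists_tendsto_nhdsLT_of_norm_deriv_le hab hu fun t ht =>
    hC _ (mem_image_of_mem H ⟨mem_image_of_mem s (Ico_subset_Icc_self ht), by simpa using hM t ht⟩)
  obtain ⟨c, hc, w, rfl, hw⟩ := exists_hasDerivWithinAt_of_locallyLipschitz hH (lt_add_one b)
    (hs.mono fun t ht => hab.le.trans ht.1) x₀
  have hsb : Tendsto s (𝓝[<] b) (𝓝 (s b)) :=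
    (hs.continuousAt (Ici_mem_nhds hab)).mono_left nhdsWithin_le_nhds
  refine ⟨c, hc.1, (Iio b).piecewise u w, fun t ht => piecewise_eq_of_mem _ _ _ ht.2,
    hasDerivWithinAt_piecewise_Iio (F := fun t x => H (s t, x)) hab hc.1 hu hw hx₀ ?_⟩
  exact (hH.continuous.tendsto _).comp (hsb.prodMk_nhds hx₀)

end ODE

section BlowupProfile

/-- The time at which the solution of `B' = κ * B ^ r`, `B 0 = m` ceases to exist. -/
noncomputable def blowupTime (r κ m : ℝ) : ℝ := m ^ (1 - r) / ((r - 1) * κ)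

/-- The explicit solution of `B' = κ * B ^ r`, `B 0 = m` on `[0, blowupTime r κ m)`, obtained by
integrating `(B ^ (1 - r))' = -(r - 1) * κ`. Later values are meaningless. -/
noncomputable def blowupProfile (r κ m t : ℝ) : ℝ :=
  (m ^ (1 - r) - (r - 1) * κ * t) ^ (-(r - 1)⁻¹)

variable {r κ m t : ℝ}

lemma blowupTime_pos (hr : 1 < r) (hκ : 0 < κ) (hm : 0 < m) : 0 < blowupTime r κ m :=
  div_pos (Real.rpow_pos_of_pos hm _) (mul_pos (sub_pos.2 hr) hκ)

lemma blowupProfile_zero (hr : 1 < r) (hm : 0 < m) : blowupProfile r κ m 0 = m := by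
  have hexp : (1 - r) * -(r - 1)⁻¹ = 1 := by
    rw [← neg_sub r 1, neg_mul_neg, mul_inv_cancel₀ (sub_pos.2 hr).ne']
  rw [blowupProfile, mul_zero, sub_zero, ← Real.rpow_mul hm.le, hexp, Real.rpow_one]

lemma lt_blowupTime_iff (hr : 1 < r) (hκ : 0 < κ) :
    t < blowupTime r κ m ↔ 0 < m ^ (1 - r) - (r - 1) * κ * t := by
  rw [blowupTime, lt_div_iff₀' (mul_pos (sub_pos.2 hr) hκ), sub_pos]

lemma blowupProfile_pos (hr : 1 < r) (hκ : 0 < κ) (ht : t < blowupTime r κ m) :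
    0 < blowupProfile r κ m t :=
  Real.rpow_pos_of_pos ((lt_blowupTime_iff hr hκ).1 ht) _

lemma hasDerivAt_blowupProfile (hr : 1 < r) (hκ : 0 < κ) (ht : t < blowupTime r κ m) :
    HasDerivAt (blowupProfile r κ m) (κ * blowupProfile r κ m t ^ r) t := by
  have hr0 : r - 1 ≠ 0 := (sub_pos.2 hr).ne'
  have hbase := (lt_blowupTime_iff hr hκ).1 ht
  have hlin : HasDerivAt (fun t => m ^ (1 - r) - (r - 1) * κ * t) (-((r - 1) * κ)) t := by
    simpa using ((hasDerivAt_id' t).const_mul ((r - 1) * κ)).const_sub (m ^ (1 - r))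
  refine (hlin.rpow_const (.inl hbase.ne')).congr_deriv ?_
  have hexp : -(r - 1)⁻¹ - 1 = -(r - 1)⁻¹ * r := by field_simp; ring
  rw [hexp, Real.rpow_mul hbase.le, blowupProfile]
  field_simp

lemma tendsto_blowupProfile (hr : 1 < r) (hκ : 0 < κ) :
    Tendsto (blowupProfile r κ m) (𝓝[<] blowupTime r κ m) atTop := by
  refine (tendsto_rpow_neg_nhdsGT_zero (neg_lt_zero.2 (inv_pos.2 (sub_pos.2 hr)))).comp <|
    tendsto_nhdsWithin_iff.2 ⟨?_, eventually_mem_nhdsWithin.mono fun t ht =>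
      (lt_blowupTime_iff hr hκ).1 ht⟩
  have hzero : m ^ (1 - r) - (r - 1) * κ * blowupTime r κ m = 0 := by
    rw [blowupTime, mul_div_cancel₀ _ (mul_pos (sub_pos.2 hr) hκ).ne', sub_self]
  have hcont : Continuous fun t => m ^ (1 - r) - (r - 1) * κ * t := by fun_prop
  exact (hcont.tendsto' _ _ hzero).mono_left nhdsWithin_le_nhds

end BlowupProfile

section FiniteSup

variable {ι : Type*} [Finite ι] [Nonempty ι] {u u' : ι → ℝ → ℝ} {a b : ℝ}

lemma continuousOn_iSup_of_finite {X : Type*} [TopologicalSpace X] {S : Set X} {g : ι → X → ℝ}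
    (hg : ∀ i, ContinuousOn (g i) S) : ContinuousOn (fun x => ⨆ i, g i x) S := by
  have := Fintype.ofFinite ι
  simp_rw [← Finset.sup'_univ_eq_ciSup]
  exact ContinuousOn.finset_sup'_apply _ fun i _ => hg i

lemma le_iSup_of_deriv_lt_at_max (hu : ∀ i, ContinuousOn (u i) (Icc a b))
    (hu' : ∀ i, ∀ t ∈ Ico a b, HasDerivWithinAt (u i) (u' i t) (Ici t) t) {B B' : ℝ → ℝ}
    (hB : ContinuousOn B (Icc a b)) (hB' : ∀ t ∈ Ico a b, HasDerivWithinAt B (B' t) (Ici t) t)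
    (ha : B a ≤ ⨆ i, u i a)
    (hlt : ∀ t ∈ Ico a b, ∀ i, (∀ j, u j t ≤ u i t) → u i t = B t → B' t < u' i t) :
    ∀ t ∈ Icc a b, B t ≤ ⨆ i, u i t := by
  have hle (i : ι) (t : ℝ) : u i t ≤ ⨆ j, u j t := le_ciSup (finite_range fun j => u j t).bddAbove i
  choose i hi using fun t => exists_eq_ciSup_of_finite (f := fun j => u j t)
  have hslope : ∀ t ∈ Ico a b, ∀ r, -u' (i t) t < r →
      ∃ᶠ z in 𝓝[>] t, slope (fun t => -⨆ j, u j t) t z < r := fun t ht r hr => by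
    refine Eventually.frequently ?_
    filter_upwards [self_mem_nhdsWithin, ((hasDerivWithinAt_iff_tendsto_slope' self_notMem_Ioi).1
      (hu' (i t) t ht).neg.Ioi_of_Ici).eventually_lt_const hr] with z htz hz
    refine lt_of_le_of_lt ?_ hz
    have := sub_pos.2 (mem_Ioi.1 htz)
    simp only [slope_def_field, Pi.neg_apply, hi]
    gcongr
    exact hle (i t) z
  intro t ht
  refine neg_le_neg_iff.1 <| image_le_of_liminf_slope_right_lt_deriv_boundary' (B := fun t => -B t)
    (continuousOn_iSup_of_finite hu).neg hslope (neg_le_neg ha) hB.neg (fun t ht => (hB' t ht).neg)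
    (fun t ht h => neg_lt_neg (hlt t ht (i t) (fun j => hi t ▸ hle j t) ?_)) ht
  exact (hi t).trans (neg_injective h)

lemma monotoneOn_iSup_of_deriv_pos_at_max {S : Set ℝ} (hS : S.OrdConnected) (haS : IsLeast S a)
    (hu : ∀ i, ContinuousOn (u i) S)
    (hu' : ∀ i, ∀ t ∈ S, HasDerivWithinAt (u i) (u' i t) (Ici t) t)
    (hpos : ∀ t ∈ S, ∀ i, (∀ j, u j t ≤ u i t) → 0 < u i t → 0 < u' i t)
    (ha : 0 < ⨆ i, u i a) : MonotoneOn (fun t => ⨆ i, u i t) S := by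
  have le_of_pos {s t : ℝ} (hs : s ∈ S) (ht : t ∈ S) (hst : s ≤ t) (h0 : 0 < ⨆ i, u i s) :
      ⨆ i, u i s ≤ ⨆ i, u i t := by
    have hsub : Icc s t ⊆ S := hS.out hs ht
    refine le_iSup_of_deriv_lt_at_max (fun i => (hu i).mono hsub)
      (fun i r hr => hu' i r (hsub (Ico_subset_Icc_self hr))) continuousOn_const
      (fun r _ => hasDerivWithinAt_const _ _ (⨆ i, u i s)) le_rfl
      (fun r hr i hi h => hpos r (hsub (Ico_subset_Icc_self hr)) i hi (h ▸ h0)) t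
      (right_mem_Icc.2 hst)
  exact fun s hs t ht hst => le_of_pos hs ht hst (ha.trans_le (le_of_pos haS.1 hs (haS.2 hs) ha))

lemma sub_lt_blowupTime_of_rpow_le_deriv_at_max (hu : ∀ i, ContinuousOn (u i) (Icc a b))
    (hu' : ∀ i, ∀ t ∈ Ico a b, HasDerivWithinAt (u i) (u' i t) (Ici t) t) {r c κ : ℝ} (hr : 1 < r)
    (hκ : 0 < κ) (hκc : κ < c) (ha : 0 < ⨆ i, u i a)
    (hgrow : ∀ t ∈ Ico a b, ∀ i, (∀ j, u j t ≤ u i t) → c * u i t ^ r ≤ u' i t) :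
    b - a < blowupTime r κ (⨆ i, u i a) := by
  set m := ⨆ i, u i a
  by_contra! hlong
  have hsubsol : ∀ τ ∈ Ico 0 (blowupTime r κ m), blowupProfile r κ m τ ≤ ⨆ i, u i (a + τ) := by
    intro τ hτ
    have hb : a + τ ≤ b := by linarith [hτ.2]
    have hlt {s : ℝ} (hs : s ∈ Icc a (a + τ)) : s - a < blowupTime r κ m := by
      linarith [hs.2, hτ.2]
    have hderiv {s : ℝ} (hs : s ∈ Icc a (a + τ)) :=
      (hasDerivAt_blowupProfile hr hκ (hlt hs)).comp_sub_const s a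
    simpa using le_iSup_of_deriv_lt_at_max (fun i => (hu i).mono (Icc_subset_Icc_right hb))
      (fun i s hs => hu' i s (Ico_subset_Ico_right hb hs))
      (fun s hs => (hderiv hs).continuousAt.continuousWithinAt)
      (fun s hs => (hderiv (Ico_subset_Icc_self hs)).hasDerivWithinAt)
      (by rw [sub_self, blowupProfile_zero hr ha])
      (fun s hs i hi h => (mul_lt_mul_of_pos_right hκc (Real.rpow_pos_of_pos
        (blowupProfile_pos hr hκ (hlt (Ico_subset_Icc_self hs))) r)).trans_le
        (h ▸ hgrow s (Ico_subset_Ico_right hb hs) i hi))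
      (a + τ) (right_mem_Icc.2 (le_add_of_nonneg_right hτ.1))
  obtain ⟨M, hM⟩ := isCompact_Icc.bddAbove_image (continuousOn_iSup_of_finite hu)
  obtain ⟨τ, hMτ, hτ⟩ := (((tendsto_blowupProfile hr hκ).eventually_gt_atTop M).and
    (Ico_mem_nhdsLT (blowupTime_pos hr hκ ha))).exists
  exact (hMτ.trans_le (hsubsol τ hτ)).not_ge
    (hM (mem_image_of_mem _ ⟨by linarith [hτ.1], by linarith [hτ.2]⟩))

end FiniteSup

lemma tendsto_atTop_nhdsLT_of_monotoneOn {m : ℝ → ℝ} {a b : ℝ} (hm : MonotoneOn m (Ico a b))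
    (hunb : ¬BddAbove (m '' Ico a b)) : Tendsto m (𝓝[<] b) atTop := by
  refine tendsto_atTop.2 fun C => ?_
  obtain ⟨_, ⟨t, ht, rfl⟩, hC⟩ := not_bddAbove_iff.1 hunb C
  filter_upwards [Ico_mem_nhdsLT ht.2] with s hs
  exact hC.le.trans (hm ht ⟨ht.1.trans hs.1, hs.2⟩ hs.1)

section TimeInterval

variable {T : ℝ≥0∞} {t : ℝ}

lemma ITv_ofReal (b : ℝ) : ITv (ENNReal.ofReal b) = Ico 0 b :=
  ext fun _ => and_congr_right ENNReal.ofReal_lt_ofReal_iff_of_nonneg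

lemma ordConnected_ITv : (ITv T).OrdConnected :=
  ⟨fun _ hs _ ht _ hr => ⟨hs.1.trans hr.1, (ENNReal.ofReal_le_ofReal hr.2).trans_lt ht.2⟩⟩

lemma isLeast_ITv (hT : 0 < T) : IsLeast (ITv T) 0 := ⟨⟨le_rfl, by simpa⟩, fun _ ht => ht.1⟩

lemma ITv_mem_nhdsGE (ht : t ∈ ITv T) : ITv T ∈ 𝓝[≥] t := by
  have hlt : ∀ᶠ s in 𝓝 t, ENNReal.ofReal s < T :=
    ENNReal.continuous_ofReal.continuousAt.eventually_lt_const ht.2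
  filter_upwards [self_mem_nhdsWithin, hlt.filter_mono nhdsWithin_le_nhds] with s hts hs
  exact ⟨ht.1.trans hts, hs⟩

lemma uniqueDiffOn_ITv : UniqueDiffOn ℝ (ITv T) := fun _ ht =>
  (uniqueDiffWithinAt_Ici _).mono_nhds (nhdsWithin_le_of_mem (ITv_mem_nhdsGE ht))

lemma ITv_subset_closure_inter_Ioi : ITv T ⊆ closure (ITv T ∩ Ioi 0) := fun _ ht =>
  mem_closure_iff_nhdsWithin_neBot.2 <| (nhdsGT_neBot _).mono <| le_inf nhdsWithin_le_nhds <|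
    le_principal_iff.2 <| inter_mem (nhdsWithin_mono _ Ioi_subset_Ici_self (ITv_mem_nhdsGE ht))
      (mem_of_superset self_mem_nhdsWithin (Ioi_subset_Ioi ht.1))

end TimeInterval

section Laplacian

variable {V : Type*} {ω : V → V → ℝ} {p : ℝ} {x : V}

lemma pLap_congr {g h : V → ℝ} (hx : g x = h x) (hgh : ∀ y, ω x y ≠ 0 → g y = h y) :
    pLap ω p g x = pLap ω p h x := by
  unfold pLap
  congr 2
  funext y
  by_cases hy : ω x y = 0
  · simp only [hy, zero_mul]
  · rw [hx, hgh y hy]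

lemma graphMu_nonneg (hω : ∀ y, 0 ≤ ω x y) : 0 ≤ graphMu ω x := tsum_nonneg hω

lemma pLap_nonneg_of_forall_le {g : V → ℝ} (hω : ∀ y, 0 ≤ ω x y) (hg : ∀ y, g x ≤ g y) :
    0 ≤ pLap ω p g x :=
  mul_nonneg (inv_nonneg.2 (graphMu_nonneg hω)) <| tsum_nonneg fun y =>
    mul_nonneg (mul_nonneg (hω y) (Real.rpow_nonneg (abs_nonneg _) _)) (sub_nonneg.2 (hg y))

lemma neg_rpow_le_pLap {g : V → ℝ} (hp : 2 ≤ p) (hω : ∀ y, 0 ≤ ω x y) (hsum : Summable (ω x))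
    (hg0 : ∀ y, 0 ≤ g y) (hg : ∀ y, g y ≤ g x) : -g x ^ (p - 1) ≤ pLap ω p g x := by
  have hM : 0 ≤ g x ^ (p - 1) := Real.rpow_nonneg (hg0 x) _
  have hterm (y : V) : ω x y * |g y - g x| ^ (p - 2) * (g y - g x) =
      -(ω x y * |g y - g x| ^ (p - 1)) := by
    have hpow : |g y - g x| ^ (p - 1) = |g y - g x| ^ (p - 2) * |g y - g x| := by
      rw [← Real.rpow_add_one' (abs_nonneg _) (by linarith)]
      ring_nf
    rw [hpow, abs_of_nonpos (sub_nonpos.2 (hg y))]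
    ring
  have hle (y : V) : ω x y * |g y - g x| ^ (p - 1) ≤ ω x y * g x ^ (p - 1) := by
    refine mul_le_mul_of_nonneg_left
      (Real.rpow_le_rpow (abs_nonneg _) ?_ (by linarith)) (hω y)
    exact abs_le.2 ⟨by linarith [hg0 y], by linarith [hg y, hg0 x]⟩
  have hsum' : Summable fun y => ω x y * |g y - g x| ^ (p - 1) :=
    (hsum.mul_right _).of_nonneg_of_le
      (fun y => mul_nonneg (hω y) (Real.rpow_nonneg (abs_nonneg _) _)) hle
  unfold pLap
  simp_rw [hterm, tsum_neg, mul_neg]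
  refine neg_le_neg ?_
  calc (graphMu ω x)⁻¹ * ∑' y, ω x y * |g y - g x| ^ (p - 1)
      ≤ (graphMu ω x)⁻¹ * (graphMu ω x * g x ^ (p - 1)) := by
        rw [graphMu, ← tsum_mul_right]
        exact mul_le_mul_of_nonneg_left (hsum'.tsum_le_tsum hle (hsum.mul_right _))
          (inv_nonneg.2 (graphMu_nonneg hω))
    _ ≤ g x ^ (p - 1) := by
        rw [← mul_assoc]
        exact mul_le_of_le_one_left hM inv_mul_le_one

end Laplacian

section DirichletField

variable {V : Type*} {U : Set V}

/-- A function on `U` extended by `0` to all vertices, i.e. with the Dirichlet condition built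
in. -/
noncomputable def extendByZero (v : U → ℝ) : V → ℝ := Function.extend Subtype.val v 0

lemma extendByZero_coe (v : U → ℝ) (x : U) : extendByZero v x = v x :=
  Subtype.val_injective.extend_apply v 0 x

lemma extendByZero_of_notMem (v : U → ℝ) {x : V} (hx : x ∉ U) : extendByZero v x = 0 :=
  Function.extend_val_apply' hx

lemma extendByZero_nonneg {v : U → ℝ} (hv : 0 ≤ v) : 0 ≤ extendByZero v := fun x => by
  by_cases hx : x ∈ U
  · exact (extendByZero_coe v ⟨x, hx⟩).symm ▸ hv _
  · exact (extendByZero_of_notMem v hx).ge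

lemma extendByZero_le {v : U → ℝ} {M : ℝ} (hM : 0 ≤ M) (hv : ∀ x, v x ≤ M) (x : V) :
    extendByZero v x ≤ M := by
  by_cases hx : x ∈ U
  · exact (extendByZero_coe v ⟨x, hx⟩).symm ▸ hv _
  · exact (extendByZero_of_notMem v hx).symm ▸ hM

/-- The right-hand side of the Dirichlet problem as a vector field on the functions on `U`;
`s` stands for the value of `σ` at the current time. -/
noncomputable def dirichletField (ω : V → V → ℝ) (p : ℝ) (f : ℝ → ℝ) (s v : U → ℝ) : U → ℝ :=
  fun x => pLap ω p (extendByZero v) x + s x * f (v x)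

variable {ω : V → V → ℝ} {p : ℝ} {f : ℝ → ℝ} {x : U}

lemma pLap_extendByZero [Fintype U] (hsum : Summable (ω x)) (v : U → ℝ) :
    pLap ω p (extendByZero v) x = (graphMu ω x)⁻¹ *
      (∑ y : U, ω x y * (|v y - v x| ^ (p - 2) * (v y - v x)) +
        (∑' y : ↥Uᶜ, ω x y) * (|0 - v x| ^ (p - 2) * (0 - v x))) := by
  set F : V → ℝ := fun y => ω x y * |extendByZero v y - extendByZero v x| ^ (p - 2) *
    (extendByZero v y - extendByZero v x) with hF
  have hin : F ∘ ((↑) : U → V) = fun y : U => ω x y * (|v y - v x| ^ (p - 2) * (v y - v x)) := by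
    funext y
    simp only [hF, Function.comp_apply, extendByZero_coe, mul_assoc]
  have hout : F ∘ ((↑) : ↥Uᶜ → V) =
      fun y : ↥Uᶜ => ω x y * (|0 - v x| ^ (p - 2) * (0 - v x)) := by
    funext y
    simp only [hF, Function.comp_apply, extendByZero_coe, extendByZero_of_notMem v y.2, mul_assoc]
  have hsplit := Summable.tsum_add_tsum_compl (s := U) (f := F)
    (summable_of_hasFiniteSupport (toFinite _))
    (hout ▸ (hsum.subtype Uᶜ).mul_right _)
  rw [pLap, ← hsplit, ← tsum_mul_right, ← tsum_fintype (L := .unconditional _)]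
  exact congrArg _ (congrArg₂ _ (tsum_congr (congrFun hin)) (tsum_congr (congrFun hout)))

lemma contDiff_pLap_extendByZero [Fintype U] (hp : 2 < p) (hsum : Summable (ω x)) :
    ContDiff ℝ 1 fun v : U → ℝ => pLap ω p (extendByZero v) x := by
  simp_rw [pLap_extendByZero hsum]
  have hpow {g : (U → ℝ) → ℝ} (hg : ContDiff ℝ 1 g) :
      ContDiff ℝ 1 fun v => |g v| ^ (p - 2) * g v :=
    (contDiff_abs_rpow_mul_self (sub_pos.2 hp)).comp hg
  exact contDiff_const.mul <| (ContDiff.sum fun y _ => contDiff_const.mul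
    (hpow ((contDiff_apply ℝ ℝ y).sub (contDiff_apply ℝ ℝ x)))).add <|
    contDiff_const.mul (hpow (contDiff_const.sub (contDiff_apply ℝ ℝ x)))

lemma locallyLipschitz_dirichletField [Fintype U] (hp : 2 < p) (hsum : ∀ x ∈ U, Summable (ω x))
    (hf : LocallyLipschitz f) :
    LocallyLipschitz fun q : (U → ℝ) × (U → ℝ) => dirichletField ω p f q.1 q.2 := by
  refine locallyLipschitz_pi fun x => ?_
  have heval : LocallyLipschitz fun v : U → ℝ => v x := (LipschitzWith.eval x).locallyLipschitz
  have hfst : LocallyLipschitz fun q : (U → ℝ) × (U → ℝ) => q.1 x :=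
    heval.comp LipschitzWith.prod_fst.locallyLipschitz
  have hsnd : LocallyLipschitz fun q : (U → ℝ) × (U → ℝ) => q.2 x :=
    heval.comp LipschitzWith.prod_snd.locallyLipschitz
  have hmul : LocallyLipschitz fun r : ℝ × ℝ => r.1 * r.2 :=
    (contDiff_mul (𝕜 := ℝ)).locallyLipschitz
  exact ((contDiff_pLap_extendByZero hp (hsum x x.2)).locallyLipschitz.comp
    LipschitzWith.prod_snd.locallyLipschitz).add (hmul.comp (hfst.prodMk (hf.comp hsnd)))

lemma locallyLipschitz_dirichletField_posPart [Fintype U] (hp : 2 < p)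
    (hsum : ∀ x ∈ U, Summable (ω x)) (hf : LocallyLipschitz f) :
    LocallyLipschitz fun q : (U → ℝ) × (U → ℝ) => dirichletField ω p f q.1 q.2⁺ := by
  have hpos : LocallyLipschitz fun v : U → ℝ => v⁺ := locallyLipschitz_pi fun x =>
    (lipschitzWith_posPart.comp (LipschitzWith.eval x)).locallyLipschitz
  exact ((locallyLipschitz_dirichletField hp hsum hf).comp <|
    LipschitzWith.prod_fst.locallyLipschitz.prodMk
      (hpos.comp LipschitzWith.prod_snd.locallyLipschitz) :)

lemma le_dirichletField_of_forall_le {s v : U → ℝ} {δ ε : ℝ} (hp : 2 ≤ p)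
    (hω : ∀ y, 0 ≤ ω x y) (hsum : Summable (ω x)) (hδ : 0 < δ) (hs : δ ≤ s x) (hε : 0 ≤ ε)
    (hf : ∀ r, 0 ≤ r → (1 / δ + ε) * r ^ (p - 1) ≤ f r) (hv : 0 ≤ v) (hx : ∀ y, v y ≤ v x) :
    δ * ε * v x ^ (p - 1) ≤ dirichletField ω p f s v x := by
  have hlap : -v x ^ (p - 1) ≤ pLap ω p (extendByZero v) x := by
    simpa only [extendByZero_coe] using neg_rpow_le_pLap hp hω hsum (extendByZero_nonneg hv)
      fun y => extendByZero_coe v x ▸ extendByZero_le (hv x) hx y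
  have hpow : 0 ≤ v x ^ (p - 1) := Real.rpow_nonneg (hv x) _
  have hsource : δ * ((1 / δ + ε) * v x ^ (p - 1)) ≤ s x * f (v x) :=
    mul_le_mul hs (hf _ (hv x)) (by positivity) (hδ.le.trans hs)
  calc δ * ε * v x ^ (p - 1) = -v x ^ (p - 1) + δ * ((1 / δ + ε) * v x ^ (p - 1)) := by
        field_simp; ring
    _ ≤ dirichletField ω p f s v x := add_le_add hlap hsource

lemma dirichletField_nonneg_of_eq_zero {s v : U → ℝ} (hω : ∀ y, 0 ≤ ω x y) (hs : 0 ≤ s x)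
    (hf0 : 0 ≤ f 0) (hv : 0 ≤ v) (hx : v x = 0) : 0 ≤ dirichletField ω p f s v x := by
  refine add_nonneg (pLap_nonneg_of_forall_le hω fun y => ?_) (mul_nonneg hs (hx ▸ hf0))
  rw [extendByZero_coe, hx]
  exact extendByZero_nonneg hv y

end DirichletField

section Solutions

variable {V : Type*} {ω : V → V → ℝ} {p : ℝ} {σ : V → ℝ → ℝ} {f : ℝ → ℝ} {u0 : V → ℝ} {U : Set V}
  {T : ℝ≥0∞} {u : V → ℝ → ℝ}

lemma le_ofReal_blowupTime_of_rpow_le_deriv_at_max {ι : Type*} [Finite ι] [Nonempty ι]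
    {w w' : ι → ℝ → ℝ} (hw : ∀ i, ∀ t ∈ ITv T, HasDerivWithinAt (w i) (w' i t) (ITv T) t)
    {r c κ : ℝ} (hr : 1 < r) (hκ : 0 < κ) (hκc : κ < c) (h0 : 0 < ⨆ i, w i 0)
    (hgrow : ∀ t ∈ ITv T, ∀ i, (∀ j, w j t ≤ w i t) → c * w i t ^ r ≤ w' i t) :
    T ≤ ENNReal.ofReal (blowupTime r κ (⨆ i, w i 0)) := by
  by_contra! hlong
  have hb := blowupTime_pos hr hκ h0
  have hsub : Icc 0 (blowupTime r κ (⨆ i, w i 0)) ⊆ ITv T :=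
    ordConnected_ITv.out (isLeast_ITv (pos_of_gt hlong)).1 ⟨hb.le, hlong⟩
  refine (sub_lt_blowupTime_of_rpow_le_deriv_at_max
    (fun i t ht => (hw i t (hsub ht)).continuousWithinAt.mono hsub) (fun i t ht => ?_) hr hκ hκc h0
    fun t ht => hgrow t (hsub (Ico_subset_Icc_self ht))).ne (sub_zero _)
  have htT := hsub (Ico_subset_Icc_self ht)
  exact (hw i t htT).mono_of_mem_nhdsWithin (ITv_mem_nhdsGE htT)

lemma continuousOn_dirichletField [Finite U] (hp : 2 < p) (hsum : ∀ x ∈ U, Summable (ω x))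
    (hf : LocallyLipschitz f) (hσ : ∀ x ∈ U, ContinuousOn (σ x) (Ici 0)) {v : ℝ → U → ℝ}
    (hv : ContinuousOn v (ITv T)) :
    ContinuousOn (fun t => dirichletField ω p f (fun x => σ x t) (v t)) (ITv T) := by
  have := Fintype.ofFinite U
  have hs : ContinuousOn (fun t (x : U) => σ x t) (ITv T) :=
    continuousOn_pi.2 fun x => (hσ x x.2).mono fun _ ht => ht.1
  have hfield := (locallyLipschitz_dirichletField hp hsum hf).continuous
  exact (hfield.comp_continuousOn (hs.prodMk hv) :)

namespace IsNonnegDirichletSol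

lemma pLap_eq (hu : IsNonnegDirichletSol ω p σ f u0 U T u) (hsymm : ∀ x y, ω x y = ω y x)
    (hω : ∀ x y, 0 ≤ ω x y) {t : ℝ} (ht : t ∈ ITv T) (x : U) :
    pLap ω p (fun y => u y t) x = pLap ω p (extendByZero fun y : U => u y t) x := by
  obtain ⟨-, -, -, hbdry, -⟩ := hu
  refine pLap_congr (extendByZero_coe (fun y : U => u y t) x).symm fun y hxy => ?_
  by_cases hy : y ∈ U
  · exact (extendByZero_coe (fun y : U => u y t) ⟨y, hy⟩).symm
  · rw [extendByZero_of_notMem _ hy]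
    exact hbdry y ⟨hy, x, x.2, hsymm x y ▸ (hω x y).lt_of_ne' hxy⟩ t ht

/-- The equation also holds at `t = 0`: both sides are continuous up to the initial time. -/
lemma hasDerivWithinAt [Finite U] (hu : IsNonnegDirichletSol ω p σ f u0 U T u)
    (hsymm : ∀ x y, ω x y = ω y x) (hω : ∀ x y, 0 ≤ ω x y) (hp : 2 < p)
    (hsum : ∀ x ∈ U, Summable (ω x)) (hf : LocallyLipschitz f)
    (hσ : ∀ x ∈ U, ContinuousOn (σ x) (Ici 0)) {t : ℝ} (ht : t ∈ ITv T) :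
    HasDerivWithinAt (fun t (x : U) => u x t)
      (dirichletField ω p f (fun x : U => σ x t) fun x : U => u x t) (ITv T) t := by
  have := Fintype.ofFinite U
  have ⟨hC1, _, heq, _, _⟩ := hu
  have hcont : ContinuousOn (fun t => dirichletField ω p f (fun x : U => σ x t) fun x : U => u x t)
      (ITv T) :=
    continuousOn_dirichletField (v := fun t (x : U) => u x t) hp hsum hf hσ <|
      continuousOn_pi.2 fun x => (hC1 x x.2).continuousOn
  refine hasDerivWithinAt_pi.2 fun x => ?_
  have hderiv : EqOn (derivWithin (u x) (ITv T))
      (fun t => dirichletField ω p f (fun x : U => σ x t) (fun x : U => u x t) x) (ITv T) := by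
    refine EqOn.of_subset_closure (fun s hs => ?_)
      ((hC1 x x.2).continuousOn_derivWithin uniqueDiffOn_ITv le_rfl)
      (continuousOn_pi.1 hcont x) inter_subset_left ITv_subset_closure_inter_Ioi
    rw [heq x x.2 s hs.1 hs.2, hu.pLap_eq hsymm hω hs.1, dirichletField]
  exact ((hC1 x x.2).differentiableOn one_ne_zero t ht).hasDerivWithinAt.congr_deriv (hderiv ht)

lemma iSup_initial_pos [Finite U] (hu : IsNonnegDirichletSol ω p σ f u0 U T u) (hT : 0 < T)
    (hu0 : ∃ x ∈ U, u0 x ≠ 0) : 0 < ⨆ x : U, u x 0 := by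
  obtain ⟨-, hnonneg, -, -, hinit⟩ := hu
  obtain ⟨z, hzU, hz⟩ := hu0
  exact ((hnonneg z (.inl hzU) 0 (isLeast_ITv hT).1).lt_of_ne' (hinit z hzU ▸ hz)).trans_le
    (le_ciSup (finite_range fun x : U => u x 0).bddAbove ⟨z, hzU⟩)

end IsNonnegDirichletSol

/-- Evaluating the field at `v⁺` makes `0` a lower barrier, so nonnegativity is preserved
by the equation. -/
lemma nonneg_of_hasDerivWithinAt_dirichletField [Finite U] (hω : ∀ x y, 0 ≤ ω x y)
    (hσ : ∀ x ∈ U, ∀ t, 0 ≤ t → 0 ≤ σ x t) (hf0 : 0 ≤ f 0) {v : ℝ → U → ℝ}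
    (hv : ∀ t ∈ ITv T, HasDerivWithinAt v (dirichletField ω p f (fun x => σ x t) (v t)⁺) (ITv T) t)
    (h0 : 0 ≤ v 0) {t : ℝ} (ht : t ∈ ITv T) : 0 ≤ v t := by
  intro x
  have hsub : Icc 0 t ⊆ ITv T := ordConnected_ITv.out (isLeast_ITv (pos_of_gt ht.2)).1 ht
  refine nonneg_of_deriv_nonneg_of_neg (v := fun s => v s x)
    (fun s hs => (hasDerivWithinAt_pi.1 (hv s (hsub hs)) x).mono hsub) (h0 x)
    (fun s hs hneg => ?_) (right_mem_Icc.2 ht.1)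
  exact dirichletField_nonneg_of_eq_zero (hω x) (hσ x x.2 s hs.1) hf0 (posPart_nonneg _)
    (posPart_eq_zero.2 hneg.le)

lemma isNonnegDirichletSol_extendByZero [Finite U] (hω : ∀ x y, 0 ≤ ω x y) (hp : 2 < p)
    (hsum : ∀ x ∈ U, Summable (ω x)) (hf : LocallyLipschitz f) (hf0 : 0 ≤ f 0)
    (hσ : ∀ x ∈ U, ContinuousOn (σ x) (Ici 0)) (hσ0 : ∀ x ∈ U, ∀ t, 0 ≤ t → 0 ≤ σ x t)
    {v : ℝ → U → ℝ}
    (hv : ∀ t ∈ ITv T, HasDerivWithinAt v (dirichletField ω p f (fun x => σ x t) (v t)⁺) (ITv T) t)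
    (h0 : 0 ≤ v 0) (hu0 : ∀ x : U, v 0 x = u0 x) :
    IsNonnegDirichletSol ω p σ f u0 U T fun x t => extendByZero (v t) x := by
  have hnonneg {t : ℝ} (ht : t ∈ ITv T) : 0 ≤ v t :=
    nonneg_of_hasDerivWithinAt_dirichletField hω hσ0 hf0 hv h0 ht
  have hderiv (x : U) {t : ℝ} (ht : t ∈ ITv T) : HasDerivWithinAt (fun t => extendByZero (v t) x)
      (dirichletField ω p f (fun x => σ x t) (v t) x) (ITv T) t := by
    simpa only [extendByZero_coe, posPart_eq_self.2 (hnonneg ht)]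
      using hasDerivWithinAt_pi.1 (hv t ht) x
  have hcont : ContinuousOn (fun t => dirichletField ω p f (fun x => σ x t) (v t)) (ITv T) := by
    have := Fintype.ofFinite U
    exact continuousOn_dirichletField hp hsum hf hσ fun t ht => (hv t ht).continuousWithinAt
  refine ⟨fun x hx => (contDiffOn_one_iff_derivWithin uniqueDiffOn_ITv).2 ⟨fun t ht =>
      (hderiv ⟨x, hx⟩ ht).differentiableWithinAt, (continuousOn_pi.1 hcont ⟨x, hx⟩).congr
        fun t ht => (hderiv ⟨x, hx⟩ ht).derivWithin (uniqueDiffOn_ITv t ht)⟩,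
    fun x _ t ht => extendByZero_nonneg (hnonneg ht) x, fun x hx t ht _ => ?_,
    fun x hx t _ => extendByZero_of_notMem _ hx.1,
    fun x hx => (extendByZero_coe _ ⟨x, hx⟩).trans (hu0 ⟨x, hx⟩)⟩
  rw [(hderiv ⟨x, hx⟩ ht).derivWithin (uniqueDiffOn_ITv t ht), dirichletField,
    ← extendByZero_coe (v t) ⟨x, hx⟩]

lemma IsNonnegDirichletSol.exists_extension [Finite U] {b : ℝ} (hb : 0 < b)
    (hu : IsNonnegDirichletSol ω p σ f u0 U (ENNReal.ofReal b) u)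
    (hsymm : ∀ x y, ω x y = ω y x) (hω : ∀ x y, 0 ≤ ω x y) (hp : 2 < p)
    (hsum : ∀ x ∈ U, Summable (ω x)) (hf : LocallyLipschitz f) (hf0 : 0 ≤ f 0)
    (hσ : ∀ x ∈ U, ContinuousOn (σ x) (Ici 0)) (hσ0 : ∀ x ∈ U, ∀ t, 0 ≤ t → 0 ≤ σ x t)
    {M : ℝ} (hM : ∀ x ∈ U, ∀ t ∈ Ico 0 b, u x t ≤ M) :
    ∃ T' > ENNReal.ofReal b, ∃ v : V → ℝ → ℝ, IsNonnegDirichletSol ω p σ f u0 U T' v ∧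
      ∀ x ∈ vclosure ω U, ∀ t ∈ ITv (ENNReal.ofReal b), v x t = u x t := by
  have := Fintype.ofFinite U
  have hode := fun t => hu.hasDerivWithinAt hsymm hω hp hsum hf hσ (t := t)
  obtain ⟨-, hnonneg, -, hbdry, hinit⟩ := hu
  replace hnonneg := fun x : U => hnonneg x (.inl x.2)
  rw [ITv_ofReal] at hode hbdry hnonneg ⊢
  obtain ⟨c, hbc, v, hvu, hv⟩ := exists_continuation_of_bounded (M := max M 0)
    (locallyLipschitz_dirichletField_posPart hp hsum hf) hb
    (s := fun t (x : U) => σ x t) (u := fun t (x : U) => u x t)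
    (continuousOn_pi.2 fun x : U => hσ x x.2)
    (fun t ht => by
      simpa only [posPart_eq_self.2 (show 0 ≤ fun x : U => u x t from fun x => hnonneg x t ht)]
        using hode t ht)
    (fun t ht => (pi_norm_le_iff_of_nonneg (le_max_right M 0)).2 fun x => by
      rw [Real.norm_of_nonneg (hnonneg x t ht)]
      exact (hM x x.2 t ht).trans (le_max_left M 0))
  have hv0 : v 0 = fun x : U => u x 0 := hvu (left_mem_Ico.2 hb)
  refine ⟨ENNReal.ofReal c, (ENNReal.ofReal_lt_ofReal_iff (hb.trans hbc)).2 hbc, _,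
    isNonnegDirichletSol_extendByZero hω hp hsum hf hf0 hσ hσ0 (by rwa [ITv_ofReal])
      (fun x => (hnonneg x 0 (left_mem_Ico.2 hb)).trans_eq (congrFun hv0 x).symm)
      fun x => (congrFun hv0 x).trans (hinit x x.2), fun x hx t ht => ?_⟩
  rcases hx with hx | hx
  · rw [hvu ht, extendByZero_coe _ ⟨x, hx⟩]
  · rw [extendByZero_of_notMem _ hx.1, hbdry x hx t ht]

theorem dirichlet_solution_blows_up_general (hsymm : ∀ x y, ω x y = ω y x)
    (hω : ∀ x y, 0 ≤ ω x y) (hp : 2 < p) (hUfin : U.Finite) (hsum : ∀ x ∈ U, Summable (ω x))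
    (hσ : ∀ x ∈ U, ContinuousOn (σ x) (Ici 0)) {δ : ℝ} (hδ : 0 < δ)
    (hσδ : ∀ x ∈ U, ∀ t, 0 ≤ t → δ ≤ σ x t) (hf : LocallyLipschitz f) {ε : ℝ} (hε : 0 < ε)
    (hfgrow : ∀ s, 0 ≤ s → (1 / δ + ε) * s ^ (p - 1) ≤ f s) (hu0 : ∃ x ∈ U, u0 x ≠ 0)
    (hT : 0 < T) (hu : IsNonnegDirichletSol ω p σ f u0 U T u)
    (hmax : ¬∃ T' : ℝ≥0∞, T < T' ∧ ∃ v : V → ℝ → ℝ, IsNonnegDirichletSol ω p σ f u0 U T' v ∧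
      ∀ x ∈ vclosure ω U, ∀ t ∈ ITv T, v x t = u x t) :
    T < ⊤ ∧ Tendsto (fun t => ⨆ x : U, u x t) (𝓝[<] T.toReal) atTop := by
  have := hUfin.fintype
  have : Nonempty U := nonempty_subtype.2 (hu0.imp fun _ => And.left)
  have hpos0 : 0 < ⨆ x : U, u x 0 := hu.iSup_initial_pos hT hu0
  have hode (x : U) (t : ℝ) (ht : t ∈ ITv T) : HasDerivWithinAt (u x)
      (dirichletField ω p f (fun x : U => σ x t) (fun x : U => u x t) x) (ITv T) t :=
    hasDerivWithinAt_pi.1 (hu.hasDerivWithinAt hsymm hω hp hsum hf hσ ht) x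
  have hgrow (t : ℝ) (ht : t ∈ ITv T) (x : U) (hx : ∀ y : U, u y t ≤ u x t) :
      δ * ε * u x t ^ (p - 1) ≤
        dirichletField ω p f (fun x : U => σ x t) (fun x : U => u x t) x :=
    le_dirichletField_of_forall_le hp.le (hω x) (hsum x x.2) hδ (hσδ x x.2 t ht.1) hε.le hfgrow
      (fun y => hu.2.1 y (.inl y.2) t ht) hx
  have hδε : 0 < δ * ε := mul_pos hδ hε
  have hTtop : T < ⊤ := (le_ofReal_blowupTime_of_rpow_le_deriv_at_max hode (by linarith)
    (half_pos hδε) (half_lt_self hδε) hpos0 hgrow).trans_lt ENNReal.ofReal_lt_top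
  have hmono : MonotoneOn (fun t => ⨆ x : U, u x t) (ITv T) :=
    monotoneOn_iSup_of_deriv_pos_at_max ordConnected_ITv (isLeast_ITv hT)
      (fun x t ht => (hode x t ht).continuousWithinAt)
      (fun x t ht => (hode x t ht).mono_of_mem_nhdsWithin (ITv_mem_nhdsGE ht))
      (fun t ht x hx h => (mul_pos hδε (Real.rpow_pos_of_pos h _)).trans_le (hgrow t ht x hx)) hpos0
  obtain ⟨b, hb, rfl⟩ : ∃ b, 0 < b ∧ ENNReal.ofReal b = T :=
    ⟨T.toReal, ENNReal.toReal_pos hT.ne' hTtop.ne, ENNReal.ofReal_toReal hTtop.ne⟩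
  rw [ITv_ofReal] at hmono
  rw [ENNReal.toReal_ofReal hb.le]
  refine ⟨hTtop, tendsto_atTop_nhdsLT_of_monotoneOn hmono fun ⟨M, hM⟩ => hmax ?_⟩
  have hf0 : 0 ≤ f 0 := by simpa [Real.zero_rpow (show p - 1 ≠ 0 by linarith)] using hfgrow 0 le_rfl
  exact hu.exists_extension hb hsymm hω hp hsum hf hf0 hσ
    (fun x hx t ht => hδ.le.trans (hσδ x hx t ht))
    fun x hx t ht => (le_ciSup (finite_range fun x : U => u x t).bddAbove ⟨x, hx⟩).trans
      (hM (mem_image_of_mem _ ht))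

end Solutions

/-- if `σ ≥ δ > 0` on `U × [0,∞)`, `u0 ≥ 0` on `U` is not identically zero, and
`f(s) ≥ (1/δ + ε) s^{p-1}` for all `s ≥ 0` (some fixed `ε > 0`), then a nonnegative solution of
the Dirichlet problem on its maximal interval `[0,T)` blows up in finite time: `T < ∞` and
`max_{x ∈ U} u(x,t) → ∞` as `t → T⁻`. -/
theorem dirichlet_solution_blows_up
    {V : Type*} (ω : V → V → ℝ)
    (hsymm : ∀ x y, ω x y = ω y x)
    (hnonneg : ∀ x y, 0 ≤ ω x y)
    (hloop : ∀ x, ω x x = 0)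
    (hlf : ∀ x, (Function.support (ω x)).Finite)
    (hconn : ∀ x y, Relation.ReflTransGen (fun a b => 0 < ω a b) x y)
    (p : ℝ) (hp : 2 < p)
    (U : Set V) (hUfin : U.Finite) (hUne : U.Nonempty)
    (σ : V → ℝ → ℝ)
    (hσpos : ∀ x t, 0 ≤ t → 0 < σ x t)
    (hσcont : ∀ x, ContinuousOn (σ x) (Set.Ici 0))
    (δ : ℝ) (hδpos : 0 < δ) (hσδ : ∀ x ∈ U, ∀ t, 0 ≤ t → δ ≤ σ x t)
    (f : ℝ → ℝ) (hf : LocallyLipschitz f) (hf0 : f 0 = 0)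
    (ε : ℝ) (hε : 0 < ε)
    (hfgrow : ∀ s, 0 ≤ s → (1 / δ + ε) * s ^ (p - 1) ≤ f s)
    (u0 : V → ℝ) (hu0nn : ∀ x ∈ U, 0 ≤ u0 x) (hu0ne : ∃ x ∈ U, u0 x ≠ 0)
    (T : ℝ≥0∞) (hT : 0 < T) (u : V → ℝ → ℝ)
    (hsol : IsNonnegDirichletSol ω p σ f u0 U T u)
    (hmax : ¬ ∃ T' : ℝ≥0∞, T < T' ∧ ∃ v : V → ℝ → ℝ,
      IsNonnegDirichletSol ω p σ f u0 U T' v ∧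
      ∀ x ∈ vclosure ω U, ∀ t ∈ ITv T, v x t = u x t) :
    T < ⊤ ∧
      Filter.Tendsto (fun t => ⨆ x : U, u x.1 t)
        (nhdsWithin T.toReal (Set.Iio T.toReal)) Filter.atTop :=
  dirichlet_solution_blows_up_general hsymm hnonneg hp hUfin
    (fun x _ => summable_of_hasFiniteSupport (hlf x)) (fun x _ => hσcont x) hδpos hσδ hf hε hfgrow
    hu0ne hT hsol hmax
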